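/- Let M be a two-counter machine, Σ_M the corresponding t-ESG* basic action theory (over the fluents next, c₁, c₂, halt, with one action per instruction label, encoding the increment and decrement instructions of M via the precondition and successor-state axioms), and δ the program 'while ¬halt do πa. Poss(a)?; a done'. Then M halts (reaches the HALT instruction starting from instruction s₀ with counters c₁ = c₂ = 0) if and only if Σ_M ⊨ ¬[δ]⊥. -/

import Mathlib

/-!
Two-counter machines and the t-ESG* basic action theory `Σ_M`.

t-ESG* extends t-ESG with fluent functions of sort time together with `+`,
`-` and `<` with the intended real-number semantics.  For the reduction, the
relevant part of a t-ESG* world for the signature of `Σ_M` (the unary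
relational fluent `next`, the nullary functional time fluents `c₁`, `c₂`, the
nullary relational fluent `halt`, and the distinguished fluent `Poss`) is its
assignment of values to these fluents after every finite timed trace; timed
traces are finite sequences of (time point, action standard name) pairs, where
the actions are the instruction labels of the machine.
-/

namespace TCMRed

/-- Instructions of a two-counter machine over counters `c₁`, `c₂`
(`second = false` refers to `c₁`, `second = true` to `c₂`):
* `inc x q`: `p: x := x + 1; goto q`
* `dec x q r`: `p: if x > 0 then x := x - 1; goto q else goto r`
* `haltI`: the special instruction `HALT`. -/
inductive Instr : Type
  | inc (second : Bool) (next : ℕ)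
  | dec (second : Bool) (next jumpZero : ℕ)
  | haltI

/-- A two-counter machine: an assignment of instructions to labels, a start
label `s₀`, and the label of the special instruction `HALT`. -/
structure TCM : Type where
  prog : ℕ → Instr
  start : ℕ
  haltLbl : ℕ
  halt_spec : prog haltLbl = Instr.haltI

/-- One deterministic step of the machine on a configuration
(label, counter 1, counter 2); the machine stays put at `HALT`. -/
def TCM.step (M : TCM) : ℕ × ℕ × ℕ → ℕ × ℕ × ℕ
  | (p, n₁, n₂) =>
    match M.prog p with
    | .inc false q => (q, n₁ + 1, n₂)
    | .inc true q => (q, n₁, n₂ + 1)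
    | .dec false q r => if 0 < n₁ then (q, n₁ - 1, n₂) else (r, n₁, n₂)
    | .dec true q r => if 0 < n₂ then (q, n₁, n₂ - 1) else (r, n₁, n₂)
    | .haltI => (p, n₁, n₂)

/-- The machine halts: starting from instruction `s₀` with `c₁ = c₂ = 0`, it
reaches the instruction `HALT`. -/
def TCM.Halts (M : TCM) : Prop :=
  ∃ k : ℕ, (M.step^[k] (M.start, 0, 0)).1 = M.haltLbl

/-- Finite timed traces: (time point, action = instruction label) pairs. -/
abbrev Tr := List (ℝ × ℕ)

/-- Well-formed traces: nonnegative, monotonically nondecreasing time points. -/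
def TrWF (z : Tr) : Prop := List.Chain' (· ≤ ·) ((0 : ℝ) :: z.map Prod.fst)

/-- The fluent values of a t-ESG* world on the signature of `Σ_M`:
`next` (the next instruction), the counter values `c₁`, `c₂` (functional
fluents of sort time, interpreted over the reals), `halt`, and `Poss`. -/
structure W : Type where
  next : Tr → ℕ → Bool
  c1 : Tr → ℝ
  c2 : Tr → ℝ
  halt : Tr → Bool
  poss : Tr → ℕ → Bool

/-- `w ⊨ Σ_M`: the world satisfies the basic action theory `Σ_M`, i.e.
* `Σ₀`: initially `c₁ = 0`, `c₂ = 0` and `next(a) ≡ (a = s₀)`;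
* `Σ_pre`: `□ Poss(a) ≡ next(a)`;
* `Σ_post`: the successor state axioms, with one case per increment and
  decrement instruction of `M` (counters are incremented/decremented and the
  next instruction is updated as prescribed by the instruction executed;
  decrementation branches on whether the counter is `> 0`), and
  `□ [a] halt ≡ (a = HALT)`. -/
def Models (M : TCM) (w : W) : Prop :=
  w.c1 [] = 0 ∧ w.c2 [] = 0 ∧
  (∀ a : ℕ, w.next [] a = true ↔ a = M.start) ∧
  (∀ z : Tr, ∀ a : ℕ, w.poss z a = true ↔ w.next z a = true) ∧
  (∀ (z : Tr) (t : ℝ) (p : ℕ),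
    (w.c1 (z ++ [(t, p)]) =
      match M.prog p with
      | .inc false _ => w.c1 z + 1
      | .dec false _ _ => if 0 < w.c1 z then w.c1 z - 1 else w.c1 z
      | _ => w.c1 z) ∧
    (w.c2 (z ++ [(t, p)]) =
      match M.prog p with
      | .inc true _ => w.c2 z + 1
      | .dec true _ _ => if 0 < w.c2 z then w.c2 z - 1 else w.c2 z
      | _ => w.c2 z) ∧
    (∀ i : ℕ, w.next (z ++ [(t, p)]) i = true ↔
      (match M.prog p with
       | .inc _ q => i = q
       | .dec false q r => (0 < w.c1 z ∧ i = q) ∨ (¬ 0 < w.c1 z ∧ i = r)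
       | .dec true q r => (0 < w.c2 z ∧ i = q) ∨ (¬ 0 < w.c2 z ∧ i = r)
       | .haltI => False)) ∧
    (w.halt (z ++ [(t, p)]) = true ↔ p = M.haltLbl))

/-- A finite terminating execution trace of the program
`δ = while ¬halt do π a. Poss(a)?; a done` in the world `w`: at each step the
loop condition `¬halt` and the test `Poss(a)` of the executed action hold, and
after the trace `halt` holds (so the final test of the loop succeeds).  Thus
`w ⊨ ¬[δ]⊥` iff such a trace exists. -/
def TermTrace (M : TCM) (w : W) (z : Tr) : Prop :=
  TrWF z ∧
  (∀ (i : ℕ) (hi : i < z.length),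
    w.halt (z.take i) = false ∧ w.poss (z.take i) (z.get ⟨i, hi⟩).2 = true) ∧
  w.halt z = true

/-!
In a world satisfying `Σ_M`, if some action is possible after a run of the loop, then the fluents
`next`, `c₁`, `c₂` record the machine configuration after as many steps as the run is long.  (The
proviso excludes runs ending in a `HALT` instruction, which empties `next` while the machine stays
put.)  Hence the loop can only execute the instruction labels visited by `M`, and it sets `halt`
exactly when it executes `HALT`.

As `Σ₀` leaves the initial value of `halt` open, the loop may terminate at once for a reason that
has nothing to do with `M`; so halting of `M` can only be inferred from a terminating execution in
a world of `Σ_M` where `halt` is initially false, and such a world has to be constructed.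
-/

namespace TCM

variable {M : TCM}

/-- The configuration of `M` after `k` steps from the start label with both counters zero. -/
def config (M : TCM) (k : ℕ) : ℕ × ℕ × ℕ := M.step^[k] (M.start, 0, 0)

lemma config_succ (M : TCM) (k : ℕ) : M.config (k + 1) = M.step (M.config k) :=
  Function.iterate_succ_apply' M.step k _

lemma isFixedPt_step_of_prog_eq_haltI {c : ℕ × ℕ × ℕ} (hc : M.prog c.1 = .haltI) :
    Function.IsFixedPt M.step c := by
  simp only [Function.IsFixedPt, step, hc]

lemma config_eq_of_prog_eq_haltI {j k : ℕ} (hj : M.prog (M.config j).1 = .haltI) (hjk : j ≤ k) :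
    M.config k = M.config j := by
  obtain ⟨d, rfl⟩ := Nat.exists_eq_add_of_le' hjk
  rw [config, Function.iterate_add_apply]
  exact (isFixedPt_step_of_prog_eq_haltI hj).iterate d

lemma Halts.exists_config_eq_haltLbl_forall_lt (h : M.Halts) :
    ∃ k, (M.config k).1 = M.haltLbl ∧ ∀ j < k, M.prog (M.config j).1 ≠ .haltI := by
  classical
  have h' : ∃ k, (M.config k).1 = M.haltLbl := h
  refine ⟨Nat.find h', Nat.find_spec h', fun j hj hstuck => Nat.find_min h' hj ?_⟩
  rw [← config_eq_of_prog_eq_haltI hstuck hj.le]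
  exact Nat.find_spec h'

end TCM

/-- The trace `z` executes the body of the loop `while ¬halt do πa. Poss(a)?; a done` once per
action; unlike in `TermTrace`, the loop need not be over after `z`, and time is ignored. -/
def IsLoopRun (w : W) (z : Tr) : Prop :=
  ∀ (i : ℕ) (hi : i < z.length),
    w.halt (z.take i) = false ∧ w.poss (z.take i) (z.get ⟨i, hi⟩).2 = true

lemma isLoopRun_nil (w : W) : IsLoopRun w [] := fun _ hi => absurd hi (Nat.not_lt_zero _)

lemma isLoopRun_append_singleton {w : W} {z : Tr} {x : ℝ × ℕ} :
    IsLoopRun w (z ++ [x]) ↔ IsLoopRun w z ∧ w.halt z = false ∧ w.poss z x.2 = true := by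
  constructor
  · intro h
    refine ⟨fun i hi => ?_, by simpa using h z.length (by simp)⟩
    simpa [List.take_append_of_le_length hi.le, hi] using h i (by simp; omega)
  · rintro ⟨hz, hx⟩ i hi
    rcases Nat.lt_succ_iff_lt_or_eq.1 (by simpa using hi) with hi | rfl
    · simpa [List.take_append_of_le_length hi.le, hi] using hz i hi
    · simpa using hx

/-- After the trace `z`, the fluents `next`, `c₁`, `c₂` of the world `w` describe the
configuration `c`. -/
structure Tracks (w : W) (z : Tr) (c : ℕ × ℕ × ℕ) : Prop where
  c1_eq : w.c1 z = c.2.1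
  c2_eq : w.c2 z = c.2.2
  next_iff (a : ℕ) : w.next z a = true ↔ a = c.1

/-- The labels of the first `k` instructions executed by `M`, all at time `0`. -/
def zeroTimeTrace (M : TCM) (k : ℕ) : Tr :=
  (List.range k).map fun i => (0, (M.config i).1)

lemma zeroTimeTrace_succ (M : TCM) (k : ℕ) :
    zeroTimeTrace M (k + 1) = zeroTimeTrace M k ++ [(0, (M.config k).1)] := by
  simp [zeroTimeTrace, List.range_succ]

lemma trWF_zeroTimeTrace (M : TCM) (k : ℕ) : TrWF (zeroTimeTrace M k) := by
  have htimes : (0 : ℝ) :: (zeroTimeTrace M k).map Prod.fst = List.replicate (k + 1) 0 := by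
    simp [zeroTimeTrace, Function.comp_def, List.replicate_succ]
  rw [TrWF, htimes]
  exact List.isChain_replicate_of_rel _ le_rfl

namespace Models

variable {M : TCM} {w : W} {z : Tr} {k : ℕ}

lemma poss_iff_next (hw : Models M w) (z : Tr) (a : ℕ) :
    w.poss z a = true ↔ w.next z a = true :=
  hw.2.2.2.1 z a

lemma halt_append_iff (hw : Models M w) (z : Tr) (x : ℝ × ℕ) :
    w.halt (z ++ [x]) = true ↔ x.2 = M.haltLbl :=
  (hw.2.2.2.2 z x.1 x.2).2.2.2

lemma prog_ne_haltI_of_next_append (hw : Models M w) {x : ℝ × ℕ} {a : ℕ}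
    (ha : w.next (z ++ [x]) a = true) : M.prog x.2 ≠ .haltI := by
  intro hx
  have hnext := ((hw.2.2.2.2 z x.1 x.2).2.2.1 a).1 ha
  rwa [hx] at hnext

lemma poss_iff_of_tracks (hw : Models M w) {c : ℕ × ℕ × ℕ} (hz : Tracks w z c) (a : ℕ) :
    w.poss z a = true ↔ a = c.1 :=
  (hw.poss_iff_next z a).trans (hz.next_iff a)

lemma tracks_nil (hw : Models M w) : Tracks w [] (M.config 0) where
  c1_eq := hw.1.trans Nat.cast_zero.symm
  c2_eq := hw.2.1.trans Nat.cast_zero.symm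
  next_iff := hw.2.2.1

lemma tracks_append_step (hw : Models M w) {c : ℕ × ℕ × ℕ} (hz : Tracks w z c)
    (hc : M.prog c.1 ≠ .haltI) (t : ℝ) : Tracks w (z ++ [(t, c.1)]) (M.step c) := by
  obtain ⟨p, m, n⟩ := c
  obtain ⟨hc1, hc2, hnext, -⟩ := hw.2.2.2.2 z t p
  simp only [hz.c1_eq, hz.c2_eq] at hc1 hc2 hnext
  rcases hp : M.prog p with (_ | _) | (_ | _) | _
  case haltI => exact absurd hp hc
  case dec.false =>
    rcases m.eq_zero_or_pos with rfl | hm <;> constructor <;> simp_all [TCM.step, Nat.cast_pred]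
  case dec.true =>
    rcases n.eq_zero_or_pos with rfl | hn <;> constructor <;> simp_all [TCM.step, Nat.cast_pred]
  all_goals constructor <;> simp_all [TCM.step]

lemma tracks_of_isLoopRun (hw : Models M w) {a : ℕ} (hz : IsLoopRun w z)
    (ha : w.poss z a = true) : Tracks w z (M.config z.length) := by
  induction z using List.reverseRecOn generalizing a with
  | nil => exact hw.tracks_nil
  | append_singleton z x ih =>
    obtain ⟨hz, -, hx⟩ := isLoopRun_append_singleton.1 hz
    have htracks := ih hz hx
    have hlabel : x.2 = (M.config z.length).1 := (hw.poss_iff_of_tracks htracks _).1 hx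
    have hne := hw.prog_ne_haltI_of_next_append ((hw.poss_iff_next _ _).1 ha)
    obtain ⟨t, p⟩ := x
    obtain rfl : p = (M.config z.length).1 := hlabel
    rw [List.length_append, List.length_singleton, TCM.config_succ]
    exact hw.tracks_append_step htracks hne t

lemma halts_of_termTrace (hw : Models M w) (h0 : w.halt [] = false) (hz : TermTrace M w z) :
    M.Halts := by
  obtain ⟨-, hrun, hhalt⟩ := hz
  rcases z.eq_nil_or_concat' with rfl | ⟨y, x, rfl⟩
  · simp [h0] at hhalt
  obtain ⟨hy, -, hx⟩ := isLoopRun_append_singleton.1 hrun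
  have hlabel : x.2 = (M.config y.length).1 :=
    (hw.poss_iff_of_tracks (hw.tracks_of_isLoopRun hy hx) _).1 hx
  exact ⟨y.length, hlabel.symm.trans ((hw.halt_append_iff y x).1 hhalt)⟩

lemma tracks_zeroTimeTrace (hw : Models M w) (hk : ∀ j < k, M.prog (M.config j).1 ≠ .haltI) :
    Tracks w (zeroTimeTrace M k) (M.config k) := by
  induction k with
  | zero => exact hw.tracks_nil
  | succ k ih =>
    rw [zeroTimeTrace_succ, TCM.config_succ]
    exact hw.tracks_append_step (ih fun j hj => hk j (hj.trans k.lt_succ_self))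
      (hk k k.lt_succ_self) 0

lemma halt_zeroTimeTrace_eq_false (hw : Models M w) (h0 : w.halt [] = false)
    (hk : ∀ j < k, M.prog (M.config j).1 ≠ .haltI) : w.halt (zeroTimeTrace M k) = false := by
  cases k with
  | zero => exact h0
  | succ k =>
    rw [zeroTimeTrace_succ, ← Bool.not_eq_true, hw.halt_append_iff]
    intro hlabel
    exact hk k k.lt_succ_self ((congrArg M.prog hlabel).trans M.halt_spec)

lemma isLoopRun_zeroTimeTrace (hw : Models M w) (h0 : w.halt [] = false)
    (hk : ∀ j, j + 1 < k → M.prog (M.config j).1 ≠ .haltI) : IsLoopRun w (zeroTimeTrace M k) := by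
  induction k with
  | zero => exact isLoopRun_nil w
  | succ k ih =>
    have hlt : ∀ j < k, M.prog (M.config j).1 ≠ .haltI := fun j hj => hk j (Nat.succ_lt_succ hj)
    have hposs : w.poss (zeroTimeTrace M k) (M.config k).1 = true :=
      (hw.poss_iff_of_tracks (hw.tracks_zeroTimeTrace hlt) _).2 rfl
    rw [zeroTimeTrace_succ, isLoopRun_append_singleton]
    exact ⟨ih fun j hj => hlt j (Nat.lt_of_succ_lt hj),
      hw.halt_zeroTimeTrace_eq_false h0 hlt, hposs⟩

lemma exists_termTrace (hw : Models M w) (hM : M.Halts) : ∃ z, TermTrace M w z := by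
  cases h0 : w.halt [] with
  | true => exact ⟨[], trWF_zeroTimeTrace M 0, isLoopRun_nil w, h0⟩
  | false =>
    obtain ⟨k, hlabel, hk⟩ := hM.exists_config_eq_haltLbl_forall_lt
    refine ⟨zeroTimeTrace M (k + 1), trWF_zeroTimeTrace M _,
      hw.isLoopRun_zeroTimeTrace h0 fun j hj => hk j (Nat.lt_of_succ_lt_succ hj), ?_⟩
    rw [zeroTimeTrace_succ, hw.halt_append_iff]
    exact hlabel

end Models

/-- The configuration reached by carrying out the actions of `z` one after the other, each from
the current counter values, whether or not it is the instruction due next. -/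
def configAfter (M : TCM) (z : Tr) : ℕ × ℕ × ℕ :=
  z.foldl (fun c x => M.step (x.2, c.2)) (M.start, 0, 0)

lemma configAfter_append_singleton (M : TCM) (z : Tr) (x : ℝ × ℕ) :
    configAfter M (z ++ [x]) = M.step (x.2, (configAfter M z).2) := by
  simp [configAfter]

open Classical in
/-- A world satisfying `Σ_M` with `halt` initially false: its fluents are read off from
`configAfter`, except that no instruction is next once a `HALT` instruction has been executed. -/
noncomputable def canonicalWorld (M : TCM) : W where
  next z a := decide (a = (configAfter M z).1 ∧ ∀ x ∈ z.getLast?, M.prog x.2 ≠ .haltI)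
  c1 z := (configAfter M z).2.1
  c2 z := (configAfter M z).2.2
  halt z := decide (∃ x ∈ z.getLast?, x.2 = M.haltLbl)
  poss z a := decide (a = (configAfter M z).1 ∧ ∀ x ∈ z.getLast?, M.prog x.2 ≠ .haltI)

lemma halt_canonicalWorld_nil (M : TCM) : (canonicalWorld M).halt [] = false := by
  simp [canonicalWorld]

lemma models_canonicalWorld (M : TCM) : Models M (canonicalWorld M) := by
  refine ⟨by simp [canonicalWorld, configAfter], by simp [canonicalWorld, configAfter],
    by simp [canonicalWorld, configAfter], fun _ _ => Iff.rfl, fun z t p => ?_⟩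
  rcases hc : configAfter M z with ⟨q, m, n⟩
  simp only [canonicalWorld, decide_eq_true_eq, configAfter_append_singleton, hc, TCM.step]
  rcases hp : M.prog p with (_ | _) | (_ | _) | _
  case dec.false => rcases m.eq_zero_or_pos with rfl | hm <;> simp_all [Nat.cast_pred]
  case dec.true => rcases n.eq_zero_or_pos with rfl | hn <;> simp_all [Nat.cast_pred]
  all_goals simp_all

/-- Let `M` be a two-counter machine, `Σ_M` the corresponding
t-ESG* basic action theory, and `δ` the program
`while ¬halt do π a. Poss(a)?; a done`.  Then `M` halts (reaches the `HALT`
instruction starting from instruction `s₀` with counters `c₁ = c₂ = 0`) if and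
only if `Σ_M ⊨ ¬[δ]⊥`, i.e. iff every world satisfying `Σ_M` admits a finite
terminating execution of `δ`. -/
theorem tcm_halts_iff_entails_termination (M : TCM) :
    M.Halts ↔ ∀ w : W, Models M w → ∃ z : Tr, TermTrace M w z := by
  constructor
  · intro hM w hw
    exact hw.exists_termTrace hM
  · intro h
    obtain ⟨z, hz⟩ := h (canonicalWorld M) (models_canonicalWorld M)
    exact (models_canonicalWorld M).halts_of_termTrace (halt_canonicalWorld_nil M) hz

end TCMRed
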